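/- Let n ≥ 2, 1 ≤ s < ∞, let Ω ⊆ ℝⁿ be a bounded domain, and let 𝒯 be a family of essential tubes for Ω, the tube T ∈ 𝒯 having parameters r_T, l_T, c_T, such that the corresponding components Ω_T are pairwise disjoint. If E_𝒯 = Σ_{T∈𝒯} c_T · (r_T)ⁿ · (l_T/r_T)^{s+1} = ∞, then Ω is not an L^s-averaging domain. -/

import Mathlib

open MeasureTheory Metric Set
open scoped ENNReal

/-- The normalized `L^s`-mean oscillation integral `(1/|E|) ∫_E |u - u_E|^s dz`. -/
noncomputable def lsAvgE {n : ℕ} (s : ℝ) (u : EuclideanSpace ℝ (Fin n) → ℝ)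
    (E : Set (EuclideanSpace ℝ (Fin n))) : ℝ≥0∞ :=
  (volume E)⁻¹ * ∫⁻ z in E, ENNReal.ofReal (|u z - (⨍ y in E, u y)| ^ s)

/-- `Ω` is an `L^s`-averaging domain: there is a finite constant `C` such that for every
locally integrable `u`, `((1/|Ω|) ∫_Ω |u - u_Ω|^s)^{1/s} ≤ C · sup_B ((1/|B|) ∫_B |u - u_B|^s)^{1/s}`,
the supremum over all open balls `B ⊆ Ω`. -/
def IsLsAveragingDomain {n : ℕ} (s : ℝ) (Ω : Set (EuclideanSpace ℝ (Fin n))) : Prop :=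
  ∃ C : ℝ≥0∞, C ≠ ⊤ ∧ ∀ u : EuclideanSpace ℝ (Fin n) → ℝ,
    MeasureTheory.LocallyIntegrableOn u Ω volume →
      (lsAvgE s u Ω) ^ (1/s) ≤
        C * ⨆ (x : EuclideanSpace ℝ (Fin n)) (ρ : ℝ) (_ : 0 < ρ ∧ ball x ρ ⊆ Ω),
          (lsAvgE s u (ball x ρ)) ^ (1/s)

/-- The distance of `z` from the first coordinate axis. -/
noncomputable def radial {n : ℕ} [NeZero n] (z : EuclideanSpace ℝ (Fin n)) : ℝ :=
  Real.sqrt (∑ i ∈ Finset.univ.erase (0 : Fin n), z i ^ 2)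

/-- The standard cylinder `[0, l] × D_r^{n-1}` in `ℝⁿ`, the first coordinate being the axis. -/
def stdCylinder {n : ℕ} [NeZero n] (l r : ℝ) : Set (EuclideanSpace ℝ (Fin n)) :=
  {z | z 0 ∈ Set.Icc (0:ℝ) l ∧ radial z ≤ r}

/-- The wall `[0, l] × ∂D_r^{n-1}` of the standard cylinder. -/
def stdWall {n : ℕ} [NeZero n] (l r : ℝ) : Set (EuclideanSpace ℝ (Fin n)) :=
  {z | z 0 ∈ Set.Icc (0:ℝ) l ∧ radial z = r}

/-- The `t`-th slice `{t} × D_r^{n-1}` of the standard cylinder. -/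
def stdSlice {n : ℕ} [NeZero n] (r t : ℝ) : Set (EuclideanSpace ℝ (Fin n)) :=
  {z | z 0 = t ∧ radial z ≤ r}

/-- `T = φ '' stdCylinder l r` is an essential tube for `Ω` with parameters `l, r, c` and
corresponding component `ΩT`: `ΩT` is a connected component of `T ∩ Ω` missing the wall of `T`,
and each slice of `ΩT` has `(n-1)`-dimensional (Hausdorff) measure at least `c` times that of
the corresponding slice of the tube (an isometric copy of `D_r^{n-1}`). -/
structure IsEssentialTube {n : ℕ} [NeZero n] (Ω : Set (EuclideanSpace ℝ (Fin n)))
    (φ : EuclideanSpace ℝ (Fin n) ≃ᵢ EuclideanSpace ℝ (Fin n))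
    (l r c : ℝ) (ΩT : Set (EuclideanSpace ℝ (Fin n))) : Prop where
  l_pos : 0 < l
  r_pos : 0 < r
  c_pos : 0 < c
  isComp : ∃ p ∈ (φ '' stdCylinder l r) ∩ Ω,
    ΩT = connectedComponentIn ((φ '' stdCylinder l r) ∩ Ω) p
  wall_disjoint : ΩT ∩ (φ '' stdWall l r) = ∅
  slice_meas : ∀ t ∈ Set.Icc (0:ℝ) l,
    ENNReal.ofReal c * μH[(n:ℝ) - 1] (φ '' stdSlice r t) ≤
      μH[(n:ℝ) - 1] (ΩT ∩ φ '' stdSlice r t)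

/-!
Put on each component `ΩT` the tent of slope `±1 / r` in the axial direction of its tube, and let
`u` be the sum of these tents over a finite subfamily. A ball `B ⊆ Ω` meeting `ΩT` cannot cross the
wall of the tube. So, between the hyperplanes of the two ends, `B` lies in `ΩT`, and its radius is
at most `r` plus the distance from its centre to the hyperplane of any slice. Hence `u` differs by
at most `1` from its value at the centre of `B`, and the averaging inequality bounds
`∫_Ω |u - u_Ω|^s` independently of the subfamily. But whatever the constant `a` is, a tent differs
from `a` by at least `l / (8 r)` over an eighth of the length of its tube, so each tube contributes
at least a constant times `c rⁿ (l / r)^(s + 1)`, and these contributions sum to infinity.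
-/

section Topology

variable {X : Type*} [TopologicalSpace X] {S : Set X} {x : X}

lemma closure_connectedComponentIn_inter :
    closure (connectedComponentIn S x) ∩ S = connectedComponentIn S x := by
  by_cases hx : x ∈ S
  · have hsub : connectedComponentIn S x ⊆ closure (connectedComponentIn S x) ∩ S :=
      subset_inter subset_closure (connectedComponentIn_subset S x)
    refine Subset.antisymm ?_ hsub
    exact (isPreconnected_connectedComponentIn.subset_closure hsub
      inter_subset_left).subset_connectedComponentIn (hsub (mem_connectedComponentIn hx))
      inter_subset_right
  · rw [connectedComponentIn_eq_empty hx, closure_empty, empty_inter]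

lemma measurableSet_connectedComponentIn [MeasurableSpace X] [OpensMeasurableSpace X]
    (hS : MeasurableSet S) : MeasurableSet (connectedComponentIn S x) := by
  rw [← closure_connectedComponentIn_inter]
  exact isClosed_closure.measurableSet.inter hS

end Topology

lemma isPreconnected_ball_inter_image {V W : Type*} [SeminormedAddCommGroup V] [NormedSpace ℝ V]
    [PseudoMetricSpace W] (φ : V ≃ᵢ W) {S : Set V} (hS : Convex ℝ S) (x : W) (R : ℝ) :
    IsPreconnected (ball x R ∩ φ '' S) := by
  rw [inter_comm, ← image_inter_preimage, φ.preimage_ball]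
  exact (hS.inter (convex_ball _ _)).isPreconnected.image φ φ.continuous.continuousOn

lemma sum_le_sum_add_of_pairwise_disjoint {ι α M : Type*} [AddCommMonoid M]
    [PartialOrder M] [IsOrderedAddMonoid M] {f : ι → α → M} {A : ι → Set α} (hf : ∀ i x, 0 ≤ f i x)
    (hfA : ∀ i, ∀ x ∉ A i, f i x = 0) (hA : Pairwise (Function.onFun Disjoint A)) (F : Finset ι)
    {x y : α} {δ : M} (hδ : 0 ≤ δ) (h : ∀ i, f i x ≤ f i y + δ) :
    ∑ i ∈ F, f i x ≤ ∑ i ∈ F, f i y + δ := by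
  have hsum_nonneg : 0 ≤ ∑ i ∈ F, f i y := Finset.sum_nonneg fun i _ => hf i y
  by_cases hx : ∃ i ∈ F, x ∈ A i
  · obtain ⟨i, hiF, hxi⟩ := hx
    have hothers : ∀ j ∈ F, j ≠ i → f j x = 0 := fun j _ hji =>
      hfA j x (disjoint_left.1 (hA hji.symm) hxi)
    calc ∑ j ∈ F, f j x = f i x := Finset.sum_eq_single_of_mem i hiF hothers
      _ ≤ f i y + δ := h i
      _ ≤ ∑ j ∈ F, f j y + δ := by gcongr; exact Finset.single_le_sum (fun j _ => hf j y) hiF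
  · push Not at hx
    rw [Finset.sum_eq_zero fun i hi => hfA i x (hx i hi)]
    exact add_nonneg hsum_nonneg hδ

section MeanOscillation

variable {n : ℕ} {s : ℝ} {u : EuclideanSpace ℝ (Fin n) → ℝ} {Ω E : Set (EuclideanSpace ℝ (Fin n))}

lemma lsAvgE_rpow_le_of_abs_sub_le (hs : 0 < s) (hE : MeasurableSet E) (hE0 : volume E ≠ 0)
    (hEtop : volume E ≠ ⊤) (hu : IntegrableOn u E) {b δ : ℝ} (hosc : ∀ z ∈ E, |u z - b| ≤ δ) :
    lsAvgE s u E ^ (1 / s) ≤ ENNReal.ofReal (2 * δ) := by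
  have hmean : (⨍ y in E, u y) ∈ closedBall b δ :=
    (convex_closedBall b δ).set_average_mem isClosed_closedBall hE0 hEtop
      (ae_restrict_of_forall_mem hE hosc) hu
  have hpoint : ∀ z ∈ E,
      ENNReal.ofReal (|u z - ⨍ y in E, u y| ^ s) ≤ ENNReal.ofReal (2 * δ) ^ s := fun z hz => by
    rw [← ENNReal.ofReal_rpow_of_nonneg (abs_nonneg _) hs.le]
    gcongr
    calc |u z - ⨍ y in E, u y| ≤ |u z - b| + |b - ⨍ y in E, u y| := abs_sub_le _ _ _
      _ ≤ δ + δ := add_le_add (hosc z hz) (by rwa [abs_sub_comm])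
      _ = 2 * δ := (two_mul δ).symm
  have havg : lsAvgE s u E ≤ ENNReal.ofReal (2 * δ) ^ s :=
    calc lsAvgE s u E ≤ (volume E)⁻¹ * ∫⁻ _ in E, ENNReal.ofReal (2 * δ) ^ s := by
          unfold lsAvgE
          gcongr 1
          exact setLIntegral_mono' hE hpoint
      _ = ENNReal.ofReal (2 * δ) ^ s := by
          rw [setLIntegral_const, mul_left_comm, ENNReal.inv_mul_cancel hE0 hEtop, mul_one]
  rw [one_div, ENNReal.rpow_inv_le_iff hs]
  exact havg

lemma volume_mul_lsAvgE (hEtop : volume E ≠ ⊤) :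
    volume E * lsAvgE s u E = ∫⁻ z in E, ENNReal.ofReal (|u z - ⨍ y in E, u y| ^ s) := by
  rcases eq_or_ne (volume E) 0 with hE0 | hE0
  · rw [hE0, zero_mul, setLIntegral_measure_zero E _ hE0]
  · rw [lsAvgE, ← mul_assoc, ENNReal.mul_inv_cancel hE0 hEtop, one_mul]

lemma IsLsAveragingDomain.exists_lintegral_le (h : IsLsAveragingDomain s Ω) (hs : 0 < s)
    (hΩtop : volume Ω ≠ ⊤) (δ : ℝ) : ∃ K : ℝ≥0∞, K ≠ ⊤ ∧ ∀ u : EuclideanSpace ℝ (Fin n) → ℝ,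
      IntegrableOn u Ω →
      (∀ x R, ball x R ⊆ Ω → ∀ z ∈ ball x R, |u z - u x| ≤ δ) →
      ∫⁻ z in Ω, ENNReal.ofReal (|u z - ⨍ y in Ω, u y| ^ s) ≤ K := by
  obtain ⟨C, hC, havg⟩ := h
  refine ⟨volume Ω * (C * ENNReal.ofReal (2 * δ)) ^ s, by finiteness, fun u hu hosc => ?_⟩
  rw [← volume_mul_lsAvgE hΩtop]
  gcongr
  rw [← ENNReal.rpow_inv_le_iff hs, ← one_div]
  refine (havg u hu.locallyIntegrableOn).trans ?_
  gcongr
  refine iSup_le fun x => iSup_le fun R => iSup_le fun ⟨hR, hball⟩ => ?_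
  exact lsAvgE_rpow_le_of_abs_sub_le hs measurableSet_ball (measure_ball_pos _ _ hR).ne'
    measure_ball_lt_top.ne (hu.mono_set hball) (hosc x R hball)

end MeanOscillation

lemma measurePreserving_isometryEquiv {V W : Type*} [NormedAddCommGroup V] [InnerProductSpace ℝ V]
    [FiniteDimensional ℝ V] [MeasurableSpace V] [BorelSpace V] [NormedAddCommGroup W]
    [InnerProductSpace ℝ W] [FiniteDimensional ℝ W] [MeasurableSpace W] [BorelSpace W]
    (φ : V ≃ᵢ W) : MeasurePreserving φ := by
  have hdim : Module.finrank ℝ W = Module.finrank ℝ V :=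
    φ.symm.toRealAffineIsometryEquiv.linearIsometryEquiv.toLinearEquiv.finrank_eq
  rw [← InnerProductSpace.euclideanHausdorffMeasure_eq_volume,
    ← InnerProductSpace.euclideanHausdorffMeasure_eq_volume, hdim]
  exact φ.measurePreserving_euclideanHausdorffMeasure _

section Coordinates

variable {m : ℕ}

/-- The coordinates of `z ∈ ℝ × ℝᵐ` in the second factor, the one containing the cross-section
`D_r^m` of a standard cylinder. -/
noncomputable def transverse : EuclideanSpace ℝ (Fin (m + 1)) →ₗ[ℝ] EuclideanSpace ℝ (Fin m) where
  toFun z := WithLp.toLp 2 (Fin.tail z.ofLp)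
  map_add' _ _ := rfl
  map_smul' _ _ := rfl

/-- The embedding of `ℝᵐ` as the hyperplane `{t} × ℝᵐ` of `ℝᵐ⁺¹`, which contains the `t`-th slice
of a standard cylinder. -/
noncomputable def sliceEmbedding (t : ℝ) (y : EuclideanSpace ℝ (Fin m)) :
    EuclideanSpace ℝ (Fin (m + 1)) :=
  WithLp.toLp 2 (Fin.cons t y.ofLp)

lemma radial_eq_norm_transverse (z : EuclideanSpace ℝ (Fin (m + 1))) :
    radial z = ‖transverse z‖ := by
  have herase : Finset.univ.erase (0 : Fin (m + 1)) = Finset.univ.map (Fin.succEmb m) := by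
    ext i; simp [Fin.exists_succ_eq]
  rw [radial, EuclideanSpace.norm_eq, herase, Finset.sum_map]
  simp [transverse, Fin.tail_def]

lemma continuous_radial : Continuous (radial : EuclideanSpace ℝ (Fin (m + 1)) → ℝ) := by
  unfold radial
  fun_prop

lemma convexOn_radial : ConvexOn ℝ univ (radial : EuclideanSpace ℝ (Fin (m + 1)) → ℝ) := by
  rw [funext radial_eq_norm_transverse]
  exact convexOn_univ_norm.comp_linearMap transverse

lemma convex_slab (l : ℝ) : Convex ℝ {z : EuclideanSpace ℝ (Fin (m + 1)) | z 0 ∈ Icc 0 l} :=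
  (convex_Icc 0 l).linear_preimage (EuclideanSpace.proj 0 : _ →L[ℝ] ℝ).toLinearMap

lemma convex_stdCylinder (l r : ℝ) :
    Convex ℝ (stdCylinder l r : Set (EuclideanSpace ℝ (Fin (m + 1)))) := by
  have hradial : Convex ℝ {z : EuclideanSpace ℝ (Fin (m + 1)) | radial z ≤ r} := by
    simpa only [mem_univ, true_and] using convexOn_radial.convex_le r
  exact (convex_slab l).inter hradial

lemma isClosed_stdCylinder (l r : ℝ) :
    IsClosed (stdCylinder l r : Set (EuclideanSpace ℝ (Fin (m + 1)))) :=
  (isClosed_Icc.preimage (by fun_prop)).inter (isClosed_le continuous_radial continuous_const)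

lemma isometry_sliceEmbedding (t : ℝ) :
    Isometry (sliceEmbedding t : EuclideanSpace ℝ (Fin m) → _) := by
  refine Isometry.of_dist_eq fun x y => ?_
  rw [EuclideanSpace.dist_eq, EuclideanSpace.dist_eq, Fin.sum_univ_succ]
  simp [sliceEmbedding]

lemma stdSlice_eq_image (r t : ℝ) : (stdSlice r t : Set (EuclideanSpace ℝ (Fin (m + 1)))) =
    sliceEmbedding t '' closedBall 0 r := by
  ext z
  simp only [stdSlice, mem_ofPred_eq, mem_image, mem_closedBall_zero_iff,
    radial_eq_norm_transverse]
  constructor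
  · rintro ⟨rfl, hr⟩
    exact ⟨transverse z, hr, congrArg (WithLp.toLp 2) (Fin.cons_self_tail z.ofLp)⟩
  · rintro ⟨y, hy, rfl⟩
    exact ⟨rfl, hy⟩

lemma volume_eq_lintegral_volume_slice {S : Set (EuclideanSpace ℝ (Fin (m + 1)))}
    (hS : MeasurableSet S) : volume S = ∫⁻ t, volume (sliceEmbedding t ⁻¹' S) := by
  have hcoord := PiLp.volume_preserving_toLp (Fin (m + 1))
  have hsplit := (volume_preserving_piFinSuccAbove (fun _ : Fin (m + 1) => ℝ) 0).symm
  rw [← (hcoord.comp hsplit).measure_preimage hS.nullMeasurableSet, Measure.volume_eq_prod,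
    Measure.prod_apply ((hcoord.comp hsplit).measurable hS)]
  congr 1 with t
  have hslice : MeasurableSet (sliceEmbedding t ⁻¹' S) :=
    (isometry_sliceEmbedding t).continuous.measurable hS
  rw [← (PiLp.volume_preserving_toLp (Fin m)).measure_preimage hslice.nullMeasurableSet]
  congr 1 with y
  simp [sliceEmbedding, MeasurableEquiv.piFinSuccAbove, Fin.insertNthEquiv]

lemma radius_le_of_radial_lt [NeZero m] {x : EuclideanSpace ℝ (Fin (m + 1))} {R p r : ℝ}
    (hr : 0 ≤ r) (h : ∀ w ∈ ball x R, w 0 = p → radial w < r) : R ≤ |p - x 0| + r := by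
  by_contra! hR
  let j : Fin m := 0
  obtain ⟨τ, hτ, hxτ⟩ : ∃ τ, |τ| = r ∧ r ≤ |x j.succ + τ| := by
    rcases le_total 0 (x j.succ) with hx | hx
    · exact ⟨r, abs_of_nonneg hr, by rw [abs_of_nonneg (by positivity)]; linarith⟩
    · exact ⟨-r, by rw [abs_neg, abs_of_nonneg hr],
        by rw [abs_of_nonpos (by linarith)]; linarith⟩
  let w := x + (EuclideanSpace.single 0 (p - x 0) + EuclideanSpace.single j.succ τ)
  have hw : w ∈ ball x R := by
    rw [mem_ball_iff_norm, add_sub_cancel_left]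
    calc _ ≤ ‖EuclideanSpace.single 0 (p - x 0)‖ + ‖EuclideanSpace.single j.succ τ‖ :=
          norm_add_le _ _
      _ = |p - x 0| + r := by simp [hτ]
      _ < R := hR
  have hw_radial : |w j.succ| ≤ radial w := by
    rw [radial_eq_norm_transverse]
    exact PiLp.norm_apply_le (transverse w) j
  have hwj : w j.succ = x j.succ + τ := by simp [w]
  have := h w hw (by simp [w])
  rw [hwj] at hw_radial
  linarith

end Coordinates

section Tent

/-- The tent over `[0, l]` of slope `±1 / r`, vanishing outside `[0, l]`: the axial profile of the
test function of a tube. -/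
noncomputable def tent (l r t : ℝ) : ℝ := max 0 (min t (l - t)) / r

variable {l r t : ℝ}

lemma continuous_tent : Continuous (tent l r) := by
  unfold tent
  fun_prop

lemma tent_nonneg (hr : 0 ≤ r) : 0 ≤ tent l r t := by
  unfold tent
  positivity

lemma tent_le_div (hl : 0 ≤ l) (hr : 0 ≤ r) : tent l r t ≤ l / r := by
  unfold tent
  gcongr
  grind

lemma tent_eq_zero (ht : t ∉ Icc 0 l) : tent l r t = 0 := by
  rw [tent, max_eq_left, zero_div]
  rw [mem_Icc] at ht
  grind

lemma abs_tent_sub_tent_le_one {a b : ℝ} (hl : 0 ≤ l) (hr : 0 < r)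
    (h : ∀ p ∈ Icc 0 l, |b - a| ≤ |p - a| + r) : |tent l r b - tent l r a| ≤ 1 := by
  have hleft := h 0 (left_mem_Icc.2 hl)
  have hright := h l (right_mem_Icc.2 hl)
  have hself : a ∈ Icc 0 l → |b - a| ≤ r := fun ha => by simpa using h a ha
  rw [tent, tent, ← sub_div, abs_div, abs_of_pos hr, div_le_one hr]
  rw [mem_Icc] at hself
  grind

lemma exists_Icc_le_abs_tent_sub (hl : 0 ≤ l) (hr : 0 < r) (a : ℝ) :
    ∃ p, 0 ≤ p ∧ p + l / 8 ≤ l ∧ ∀ t ∈ Icc p (p + l / 8), l / 8 / r ≤ |tent l r t - a| := by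
  have hdiv (x : ℝ) : |x / r - a| = |x - a * r| / r := by
    rw [← abs_of_pos hr, ← abs_div, abs_of_pos hr, sub_div, mul_div_cancel_right₀ _ hr.ne']
  simp only [tent, hdiv]
  -- The tent is below `l / 8 / r` near the end `0` and above `3 * l / 8 / r` near the middle.
  rcases le_total (l / 4) (a * r) with ha | ha
  · refine ⟨0, le_rfl, by linarith, fun t ⟨ht₀, ht₁⟩ => ?_⟩
    gcongr
    grind
  · refine ⟨l / 2, by positivity, by linarith, fun t ⟨ht₀, ht₁⟩ => ?_⟩
    gcongr
    grind

end Tent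

section Tube

variable {m : ℕ} {Ω ΩT : Set (EuclideanSpace ℝ (Fin (m + 1)))}
  {φ : EuclideanSpace ℝ (Fin (m + 1)) ≃ᵢ EuclideanSpace ℝ (Fin (m + 1))} {l r c : ℝ}

/-- The position `t` of a point along the axis of the tube `φ '' stdCylinder l r`: the point lies
in the hyperplane of the `t`-th slice. -/
noncomputable def axialCoord (φ : EuclideanSpace ℝ (Fin (m + 1)) ≃ᵢ EuclideanSpace ℝ (Fin (m + 1)))
    (z : EuclideanSpace ℝ (Fin (m + 1))) : ℝ := φ.symm z 0

/-- The test function of a tube: the tent of slope `±1 / r` in the axial direction, supported on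
the component `ΩT`. -/
noncomputable def tubeFun (φ : EuclideanSpace ℝ (Fin (m + 1)) ≃ᵢ EuclideanSpace ℝ (Fin (m + 1)))
    (l r : ℝ) (ΩT : Set (EuclideanSpace ℝ (Fin (m + 1)))) :
    EuclideanSpace ℝ (Fin (m + 1)) → ℝ :=
  ΩT.indicator fun z => tent l r (axialCoord φ z)

lemma continuous_axialCoord : Continuous (axialCoord φ) := by
  have := φ.symm.continuous
  unfold axialCoord
  fun_prop

lemma abs_axialCoord_sub_le_dist (z x : EuclideanSpace ℝ (Fin (m + 1))) :
    |axialCoord φ z - axialCoord φ x| ≤ dist z x := by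
  rw [← φ.symm.dist_eq, dist_eq_norm]
  exact PiLp.norm_apply_le (φ.symm z - φ.symm x) 0

namespace IsEssentialTube

lemma subset_inter (h : IsEssentialTube Ω φ l r c ΩT) : ΩT ⊆ φ '' stdCylinder l r ∩ Ω := by
  obtain ⟨p, -, rfl⟩ := h.isComp
  exact connectedComponentIn_subset _ _

lemma measurableSet (h : IsEssentialTube Ω φ l r c ΩT) (hΩ : MeasurableSet Ω) :
    MeasurableSet ΩT := by
  obtain ⟨p, -, rfl⟩ := h.isComp
  have hcylinder := φ.toHomeomorph.isClosedMap _ (isClosed_stdCylinder l r)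
  exact measurableSet_connectedComponentIn (hcylinder.measurableSet.inter hΩ)

lemma subset_of_isPreconnected (h : IsEssentialTube Ω φ l r c ΩT)
    {S : Set (EuclideanSpace ℝ (Fin (m + 1)))} (hS : IsPreconnected S)
    (hSsub : S ⊆ φ '' stdCylinder l r ∩ Ω) (hne : (S ∩ ΩT).Nonempty) : S ⊆ ΩT := by
  obtain ⟨p, -, rfl⟩ := h.isComp
  obtain ⟨q, hqS, hq⟩ := hne
  rw [connectedComponentIn_eq hq]
  exact hS.subset_connectedComponentIn hqS hSsub

lemma radial_lt (h : IsEssentialTube Ω φ l r c ΩT) {z : EuclideanSpace ℝ (Fin (m + 1))}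
    (hz : z ∈ ΩT) : radial (φ.symm z) < r := by
  obtain ⟨⟨w, hw, rfl⟩, -⟩ := h.subset_inter hz
  rw [φ.symm_apply_apply]
  refine lt_of_le_of_ne hw.2 fun hwall => ?_
  exact (h.wall_disjoint.subset ⟨hz, w, ⟨hw.1, hwall⟩, rfl⟩ : φ w ∈ (∅ : Set _))

lemma mem_of_mem_ball (h : IsEssentialTube Ω φ l r c ΩT) {x z : EuclideanSpace ℝ (Fin (m + 1))}
    {R : ℝ} (hball : ball x R ⊆ Ω) (hmeet : (ball x R ∩ ΩT).Nonempty) (hz : z ∈ ball x R)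
    (hz0 : axialCoord φ z ∈ Icc 0 l) : z ∈ ΩT := by
  have hcylinder : ball x R ∩ φ '' stdCylinder l r ⊆ ΩT :=
    h.subset_of_isPreconnected (isPreconnected_ball_inter_image φ (convex_stdCylinder l r) x R)
      (fun w hw => ⟨hw.2, hball hw.1⟩)
      (hmeet.mono fun w hw => ⟨⟨hw.1, (h.subset_inter hw.2).1⟩, hw.2⟩)
  have hmem {w} (hw : w ∈ ball x R) (hw0 : axialCoord φ w ∈ Icc 0 l)
      (hwr : radial (φ.symm w) ≤ r) : w ∈ ΩT :=
    hcylinder ⟨hw, φ.symm w, ⟨hw0, hwr⟩, φ.apply_symm_apply w⟩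
  -- Otherwise the part of the ball between the end hyperplanes, which is connected, would leave
  -- the tube and so cross its wall.
  refine hmem hz hz0 (le_of_not_gt fun hzr => ?_)
  obtain ⟨q, hq, hqT⟩ := hmeet
  obtain ⟨⟨q', hq', rfl⟩, -⟩ := h.subset_inter hqT
  obtain ⟨w, ⟨hw, w', hw', rfl⟩, hwr⟩ :=
    (isPreconnected_ball_inter_image φ (convex_slab l) x R).intermediate_value
      ⟨hq, q', hq'.1, rfl⟩ ⟨hz, φ.symm z, hz0, φ.apply_symm_apply z⟩
      (continuous_radial.comp φ.symm.continuous).continuousOn ⟨(h.radial_lt hqT).le, hzr.le⟩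
  refine (h.radial_lt (hmem hw ?_ hwr.le)).ne hwr
  rwa [axialCoord, φ.symm_apply_apply]

lemma abs_tubeFun_sub_le_one [NeZero m] (h : IsEssentialTube Ω φ l r c ΩT)
    {x z : EuclideanSpace ℝ (Fin (m + 1))} {R : ℝ} (hball : ball x R ⊆ Ω) (hz : z ∈ ball x R) :
    |tubeFun φ l r ΩT z - tubeFun φ l r ΩT x| ≤ 1 := by
  have hx : x ∈ ball x R := mem_ball_self (dist_nonneg.trans_lt hz)
  rcases (ball x R ∩ ΩT).eq_empty_or_nonempty with hempty | hmeet
  · have hzero {w} (hw : w ∈ ball x R) : tubeFun φ l r ΩT w = 0 :=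
      indicator_of_notMem (fun hwT => hempty.subset ⟨hw, hwT⟩) _
    simp [hzero hz, hzero hx]
  have htent {w} (hw : w ∈ ball x R) : tubeFun φ l r ΩT w = tent l r (axialCoord φ w) :=
    indicator_apply_eq_self.2 fun hwT =>
      tent_eq_zero fun hw0 => hwT (h.mem_of_mem_ball hball hmeet hw hw0)
  rw [htent hz, htent hx]
  refine abs_tent_sub_tent_le_one h.l_pos.le h.r_pos fun p hp => ?_
  have hR : R ≤ |p - axialCoord φ x| + r := by
    refine radius_le_of_radial_lt h.r_pos.le fun w hw hwp => ?_
    rw [← φ.preimage_ball] at hw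
    have hwT : φ w ∈ ΩT := h.mem_of_mem_ball hball hmeet hw <| by
      rwa [axialCoord, φ.symm_apply_apply, hwp]
    simpa only [φ.symm_apply_apply] using h.radial_lt hwT
  exact (abs_axialCoord_sub_le_dist z x).trans ((mem_ball.1 hz).le.trans hR)

lemma tubeFun_nonneg (h : IsEssentialTube Ω φ l r c ΩT) (z : EuclideanSpace ℝ (Fin (m + 1))) :
    0 ≤ tubeFun φ l r ΩT z :=
  indicator_nonneg (fun _ _ => tent_nonneg h.r_pos.le) z

lemma integrableOn_tubeFun (h : IsEssentialTube Ω φ l r c ΩT) (hΩ : MeasurableSet Ω)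
    (hΩtop : volume Ω ≠ ⊤) : IntegrableOn (tubeFun φ l r ΩT) Ω := by
  have hmeas : Measurable (tubeFun φ l r ΩT) :=
    (continuous_tent.comp continuous_axialCoord).measurable.indicator (h.measurableSet hΩ)
  refine Measure.integrableOn_of_bounded (M := l / r) hΩtop hmeas.aestronglyMeasurable
    (Filter.Eventually.of_forall fun z => ?_)
  rw [Real.norm_of_nonneg (h.tubeFun_nonneg z)]
  exact indicator_apply_le' (fun _ => tent_le_div h.l_pos.le h.r_pos.le)
    fun _ => (div_pos h.l_pos h.r_pos).le

lemma le_volume_slice (h : IsEssentialTube Ω φ l r c ΩT) {t : ℝ} (ht : t ∈ Icc 0 l) :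
    ENNReal.ofReal c * volume (closedBall (0 : EuclideanSpace ℝ (Fin m)) r) ≤
      volume (sliceEmbedding t ⁻¹' (φ ⁻¹' ΩT)) := by
  have hslice := h.slice_meas t ht
  rw [show ((m + 1 : ℕ) : ℝ) - 1 = m by push_cast; ring] at hslice
  have hisom := φ.isometry.comp (isometry_sliceEmbedding (m := m) t)
  have hμHE : ENNReal.ofReal c * μHE[m] (φ '' stdSlice r t) ≤ μHE[m] (ΩT ∩ φ '' stdSlice r t) := by
    simp only [Measure.euclideanHausdorffMeasure_def, Measure.smul_apply, mul_smul_comm]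
    gcongr
  rw [← EuclideanSpace.euclideanHausdorffMeasure_eq_volume, ← preimage_comp,
    ← hisom.euclideanHausdorffMeasure_image, ← hisom.euclideanHausdorffMeasure_image (s := _ ⁻¹' _)]
  rw [stdSlice_eq_image, ← image_comp] at hμHE
  refine hμHE.trans (measure_mono ?_)
  rintro _ ⟨hz, y, -, rfl⟩
  exact ⟨y, hz, rfl⟩

lemma measurableSet_inter_axialCoord (h : IsEssentialTube Ω φ l r c ΩT) (hΩ : MeasurableSet Ω)
    (a b : ℝ) : MeasurableSet (ΩT ∩ axialCoord φ ⁻¹' Icc a b) :=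
  (h.measurableSet hΩ).inter (continuous_axialCoord.measurable measurableSet_Icc)

lemma le_volume_inter_axialCoord (h : IsEssentialTube Ω φ l r c ΩT) (hΩ : MeasurableSet Ω)
    {a b : ℝ} (ha : 0 ≤ a) (hb : b ≤ l) :
    volume (closedBall (0 : EuclideanSpace ℝ (Fin m)) 1) * ENNReal.ofReal (c * r ^ m * (b - a)) ≤
      volume (ΩT ∩ axialCoord φ ⁻¹' Icc a b) := by
  set S := ΩT ∩ axialCoord φ ⁻¹' Icc a b
  have hS : MeasurableSet S := h.measurableSet_inter_axialCoord hΩ a b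
  have hφ := measurePreserving_isometryEquiv φ
  have hslice : ∀ t ∈ Icc a b, ENNReal.ofReal c *
      volume (closedBall (0 : EuclideanSpace ℝ (Fin m)) r) ≤
        volume (sliceEmbedding t ⁻¹' (φ ⁻¹' S)) := fun t ht => by
    refine (h.le_volume_slice ⟨ha.trans ht.1, ht.2.trans hb⟩).trans (measure_mono fun y hy => ?_)
    refine ⟨hy, ?_⟩
    rw [mem_preimage, axialCoord, φ.symm_apply_apply]
    exact ht
  have ⟨hr, hc⟩ := And.intro h.r_pos h.c_pos
  calc _ = ENNReal.ofReal c * volume (closedBall (0 : EuclideanSpace ℝ (Fin m)) r) *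
        volume (Icc a b) := by
        rw [Measure.addHaar_closedBall' _ _ hr.le, finrank_euclideanSpace_fin, Real.volume_Icc,
          ENNReal.ofReal_mul (by positivity), ENNReal.ofReal_mul hc.le]
        ring
    _ = ∫⁻ _ in Icc a b, ENNReal.ofReal c *
        volume (closedBall (0 : EuclideanSpace ℝ (Fin m)) r) := (setLIntegral_const _ _).symm
    _ ≤ ∫⁻ t, volume (sliceEmbedding t ⁻¹' (φ ⁻¹' S)) :=
        (setLIntegral_mono' measurableSet_Icc hslice).trans (setLIntegral_le_lintegral _ _)
    _ = volume S := by
        rw [← volume_eq_lintegral_volume_slice (hφ.measurable hS),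
          hφ.measure_preimage hS.nullMeasurableSet]

lemma le_lintegral_abs_tent_sub (h : IsEssentialTube Ω φ l r c ΩT) (hΩ : MeasurableSet Ω)
    {s : ℝ} (hs : 0 ≤ s) (a : ℝ) :
    ENNReal.ofReal (8⁻¹ ^ (s + 1)) * volume (closedBall (0 : EuclideanSpace ℝ (Fin m)) 1) *
        ENNReal.ofReal (c * r ^ (m + 1) * (l / r) ^ (s + 1)) ≤
      ∫⁻ z in ΩT, ENNReal.ofReal (|tent l r (axialCoord φ z) - a| ^ s) := by
  have ⟨hl, hr, hc⟩ := And.intro h.l_pos (And.intro h.r_pos h.c_pos)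
  obtain ⟨p, hp0, hpl, hp⟩ := exists_Icc_le_abs_tent_sub hl.le hr a
  set S := ΩT ∩ axialCoord φ ⁻¹' Icc p (p + l / 8)
  have hscale : ENNReal.ofReal (8⁻¹ ^ (s + 1)) *
      ENNReal.ofReal (c * r ^ (m + 1) * (l / r) ^ (s + 1)) =
        ENNReal.ofReal ((l / 8 / r) ^ s) * ENNReal.ofReal (c * r ^ m * (l / 8)) := by
    rw [← ENNReal.ofReal_mul (by positivity), ← ENNReal.ofReal_mul (by positivity),
      show l / 8 / r = 8⁻¹ * (l / r) by ring, Real.mul_rpow (by norm_num) (by positivity),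
      Real.rpow_add_one (by norm_num), Real.rpow_add_one (by positivity), pow_succ]
    congr 1
    field_simp
  have hvolume : volume (closedBall (0 : EuclideanSpace ℝ (Fin m)) 1) *
      ENNReal.ofReal (c * r ^ m * (l / 8)) ≤ volume S := by
    simpa only [add_sub_cancel_left] using h.le_volume_inter_axialCoord hΩ hp0 hpl
  calc _ = ENNReal.ofReal ((l / 8 / r) ^ s) *
        (volume (closedBall (0 : EuclideanSpace ℝ (Fin m)) 1) *
          ENNReal.ofReal (c * r ^ m * (l / 8))) := by
        rw [mul_right_comm, hscale, mul_right_comm, mul_assoc]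
    _ ≤ ENNReal.ofReal ((l / 8 / r) ^ s) * volume S := by gcongr
    _ = ∫⁻ _ in S, ENNReal.ofReal ((l / 8 / r) ^ s) := (setLIntegral_const _ _).symm
    _ ≤ ∫⁻ z in S, ENNReal.ofReal (|tent l r (axialCoord φ z) - a| ^ s) := by
        refine setLIntegral_mono' (h.measurableSet_inter_axialCoord hΩ _ _) fun z hz => ?_
        gcongr
        exact hp _ hz.2
    _ ≤ _ := lintegral_mono_set inter_subset_left

end IsEssentialTube

end Tube

section TubeFamily

variable {m : ℕ} {ι : Type*} {Ω : Set (EuclideanSpace ℝ (Fin (m + 1)))}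
  {φ : ι → EuclideanSpace ℝ (Fin (m + 1)) ≃ᵢ EuclideanSpace ℝ (Fin (m + 1))}
  {l r c : ι → ℝ} {ΩT : ι → Set (EuclideanSpace ℝ (Fin (m + 1)))}

/-- The test function of a finite family of tubes, on which the averaging inequality fails. -/
noncomputable def tubeSum
    (φ : ι → EuclideanSpace ℝ (Fin (m + 1)) ≃ᵢ EuclideanSpace ℝ (Fin (m + 1)))
    (l r : ι → ℝ) (ΩT : ι → Set (EuclideanSpace ℝ (Fin (m + 1)))) (F : Finset ι)
    (z : EuclideanSpace ℝ (Fin (m + 1))) : ℝ :=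
  ∑ i ∈ F, tubeFun (φ i) (l i) (r i) (ΩT i) z

lemma tubeSum_eq_tent (hdisj : Pairwise (Function.onFun Disjoint ΩT)) {F : Finset ι} {i : ι}
    (hi : i ∈ F) {z : EuclideanSpace ℝ (Fin (m + 1))} (hz : z ∈ ΩT i) :
    tubeSum φ l r ΩT F z = tent (l i) (r i) (axialCoord (φ i) z) := by
  rw [tubeSum, Finset.sum_eq_single_of_mem i hi, tubeFun, indicator_of_mem hz]
  exact fun j _ hji => indicator_of_notMem (disjoint_left.1 (hdisj hji.symm) hz) _

lemma abs_tubeSum_sub_le_one [NeZero m]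
    (hT : ∀ i, IsEssentialTube Ω (φ i) (l i) (r i) (c i) (ΩT i))
    (hdisj : Pairwise (Function.onFun Disjoint ΩT)) (F : Finset ι)
    {x z : EuclideanSpace ℝ (Fin (m + 1))} {R : ℝ} (hball : ball x R ⊆ Ω) (hz : z ∈ ball x R) :
    |tubeSum φ l r ΩT F z - tubeSum φ l r ΩT F x| ≤ 1 := by
  have hosc i := abs_sub_le_iff.1 ((hT i).abs_tubeFun_sub_le_one hball hz)
  have hsum {y w} (h : ∀ i, tubeFun (φ i) (l i) (r i) (ΩT i) y ≤
      tubeFun (φ i) (l i) (r i) (ΩT i) w + 1) : tubeSum φ l r ΩT F y ≤ tubeSum φ l r ΩT F w + 1 :=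
    sum_le_sum_add_of_pairwise_disjoint (fun i => (hT i).tubeFun_nonneg)
      (fun i _ hy => indicator_of_notMem hy _) hdisj F zero_le_one h
  rw [abs_sub_le_iff, sub_le_iff_le_add', sub_le_iff_le_add']
  exact ⟨hsum fun i => sub_le_iff_le_add'.1 (hosc i).1,
    hsum fun i => sub_le_iff_le_add'.1 (hosc i).2⟩

lemma sum_le_lintegral_abs_tubeSum_sub (hΩ : MeasurableSet Ω)
    (hT : ∀ i, IsEssentialTube Ω (φ i) (l i) (r i) (c i) (ΩT i))
    (hdisj : Pairwise (Function.onFun Disjoint ΩT)) (F : Finset ι) {s : ℝ} (hs : 0 ≤ s) (a : ℝ) :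
    ∑ i ∈ F, ENNReal.ofReal (8⁻¹ ^ (s + 1)) *
        volume (closedBall (0 : EuclideanSpace ℝ (Fin m)) 1) *
        ENNReal.ofReal (c i * r i ^ (m + 1) * (l i / r i) ^ (s + 1)) ≤
      ∫⁻ z in Ω, ENNReal.ofReal (|tubeSum φ l r ΩT F z - a| ^ s) := by
  have hmeas i : MeasurableSet (ΩT i) := (hT i).measurableSet hΩ
  calc _ ≤ ∑ i ∈ F, ∫⁻ z in ΩT i, ENNReal.ofReal (|tubeSum φ l r ΩT F z - a| ^ s) := by
        refine Finset.sum_le_sum fun i hi => ?_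
        refine ((hT i).le_lintegral_abs_tent_sub hΩ hs a).trans_eq ?_
        exact setLIntegral_congr_fun (hmeas i) fun z hz => by rw [tubeSum_eq_tent hdisj hi hz]
    _ = ∫⁻ z in ⋃ i ∈ F, ΩT i, ENNReal.ofReal (|tubeSum φ l r ΩT F z - a| ^ s) :=
        (lintegral_biUnion_finset (hdisj.set_pairwise _) (fun i _ => hmeas i) _).symm
    _ ≤ _ := lintegral_mono_set <|
        iUnion₂_subset fun i _ => (hT i).subset_inter.trans inter_subset_right

end TubeFamily

theorem not_LsAveraging_of_tubes_general {n : ℕ} [NeZero n] (hn : 2 ≤ n) {s : ℝ} (hs : 0 < s)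
    {Ω : Set (EuclideanSpace ℝ (Fin n))} (hΩ : MeasurableSet Ω) (hΩtop : volume Ω ≠ ⊤) {ι : Type*}
    {φ : ι → (EuclideanSpace ℝ (Fin n) ≃ᵢ EuclideanSpace ℝ (Fin n))}
    {l r c : ι → ℝ} {ΩT : ι → Set (EuclideanSpace ℝ (Fin n))}
    (hT : ∀ i, IsEssentialTube Ω (φ i) (l i) (r i) (c i) (ΩT i))
    (hdisj : Pairwise (Function.onFun Disjoint ΩT))
    (hdiv : ∑' i, ENNReal.ofReal (c i * r i ^ n * (l i / r i) ^ (s + 1)) = ⊤) :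
    ¬ IsLsAveragingDomain s Ω := by
  obtain ⟨m, rfl⟩ : ∃ m, n = m + 1 := ⟨n - 1, by omega⟩
  have : NeZero m := ⟨by omega⟩
  intro h
  obtain ⟨K, hK, hbound⟩ := h.exists_lintegral_le hs hΩtop 1
  set κ := ENNReal.ofReal (8⁻¹ ^ (s + 1)) * volume (closedBall (0 : EuclideanSpace ℝ (Fin m)) 1)
  have hκ : κ ≠ 0 := mul_ne_zero (ENNReal.ofReal_pos.2 (by positivity)).ne'
    (measure_closedBall_pos _ _ one_pos).ne'
  have hsum : ∑' i, κ * ENNReal.ofReal (c i * r i ^ (m + 1) * (l i / r i) ^ (s + 1)) ≤ K := by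
    rw [ENNReal.tsum_eq_iSup_sum]
    refine iSup_le fun F => (sum_le_lintegral_abs_tubeSum_sub hΩ hT hdisj F hs.le
      (⨍ y in Ω, tubeSum φ l r ΩT F y)).trans ?_
    exact hbound _ (integrable_finsetSum F fun i _ => (hT i).integrableOn_tubeFun hΩ hΩtop)
      fun x R hball z hz => abs_tubeSum_sub_le_one hT hdisj F hball hz
  rw [ENNReal.tsum_mul_left, hdiv, ENNReal.mul_top hκ, top_le_iff] at hsum
  exact hK hsum

/-- If `Ω` has a family of essential tubes with pairwise disjoint
components and divergent sum `E_𝒯`, then `Ω` is not `L^s`-averaging. -/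
theorem not_LsAveraging_of_tubes {n : ℕ} [NeZero n] (hn : 2 ≤ n) (s : ℝ) (hs : 1 ≤ s)
    (Ω : Set (EuclideanSpace ℝ (Fin n))) (hΩop : IsOpen Ω) (hΩconn : IsConnected Ω)
    (hΩbd : Bornology.IsBounded Ω) {ι : Type*}
    (φ : ι → (EuclideanSpace ℝ (Fin n) ≃ᵢ EuclideanSpace ℝ (Fin n)))
    (l r c : ι → ℝ) (ΩT : ι → Set (EuclideanSpace ℝ (Fin n)))
    (hT : ∀ i, IsEssentialTube Ω (φ i) (l i) (r i) (c i) (ΩT i))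
    (hdisj : Pairwise (Function.onFun Disjoint ΩT))
    (hdiv : ∑' i, ENNReal.ofReal (c i * r i ^ n * (l i / r i) ^ (s+1)) = ⊤) :
    ¬ IsLsAveragingDomain s Ω :=
  not_LsAveraging_of_tubes_general hn (zero_lt_one.trans_le hs) hΩop.measurableSet
    hΩbd.measure_lt_top.ne hT hdisj hdiv
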